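/- arXiv:2011.11837 — 3 statements merged into one kernel-verified Lean document; each statement's English description precedes it below -/
import Mathlib

section
/- Let n ≥ 1 be an integer, let E be an (n+1)×(n+1) real Hurwitz matrix, and let N₀ > 0 and M > 0 be constants. Suppose that for each ε ∈ (0,1) there is a continuously differentiable function η_ε : [0,∞) → ℝ^{n+1} satisfying η_ε'(t) = ε⁻¹ E η_ε(t) + d_ε(t) for all t ≥ 0, where d_ε : [0,∞) → ℝ^{n+1} satisfies ‖d_ε(t)‖ ≤ N₀ for all t ≥ 0, and suppose ‖η_ε(0)‖ ≤ M ε^{−n}. Then for every σ > 0 and every T₀ > 0 there exists ε* ∈ (0,1) such that for all ε ∈ (0, ε*) and all t ≥ T₀, ‖η_ε(t)‖ ≤ σ. (This is the scaled-error form of the state-estimation conclusion (10) of Theorem 1: the scaled observer error dynamics is a fast Hurwitz linear system perturbed by a bounded disturbance, and the error becomes smaller than any prescribed σ after any prescribed time T₀ for all sufficiently small ε.) -/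
open scoped RealInnerProductSpace

/-- A real square matrix is Hurwitz if every eigenvalue of the matrix, regarded as a
complex matrix, has negative real part. -/
def Matrix.IsHurwitz {n : Type*} [Fintype n] [DecidableEq n]
    (E : Matrix n n ℝ) : Prop :=
  ∀ μ ∈ spectrum ℂ (E.map (algebraMap ℝ ℂ)), μ.re < 0

open Filter Topology in
lemma aux_pow_tendsto {A : Type*} [NormedRing A] [NormedAlgebra ℂ A] [CompleteSpace A]
    [Nontrivial A] (a : A) (h : ∀ z ∈ spectrum ℂ a, ‖z‖ < 1) :
    Tendsto (fun k : ℕ => a ^ k) atTop (𝓝 0) := by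
  have h1 : spectralRadius ℂ a < ((1 : NNReal) : ENNReal) :=
    spectrum.spectralRadius_lt_of_forall_lt a (fun z hz => by
      have := h z hz
      rw [← NNReal.coe_lt_coe]; simpa using this)
  obtain ⟨q, hq1, hq2⟩ := ENNReal.lt_iff_exists_nnreal_btwn.1 h1
  have hq2' : q < 1 := by exact_mod_cast hq2
  have h2 := (spectrum.pow_nnnorm_pow_one_div_tendsto_nhds_spectralRadius a).eventually_lt_const hq1
  have h3 : ∀ᶠ k : ℕ in atTop, ‖a ^ k‖ ≤ (q : ℝ) ^ k := by
    filter_upwards [h2, eventually_ge_atTop 1] with k hk hk1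
    have hk0 : (k : ℝ) ≠ 0 := by positivity
    have h4 := ENNReal.rpow_le_rpow hk.le (Nat.cast_nonneg k : (0 : ℝ) ≤ k)
    rw [← ENNReal.rpow_mul, one_div, inv_mul_cancel₀ hk0, ENNReal.rpow_one,
      ENNReal.rpow_natCast] at h4
    have h5 : ‖a ^ k‖₊ ≤ q ^ k := by exact_mod_cast h4
    exact_mod_cast h5
  exact squeeze_zero_norm' h3
    (tendsto_pow_atTop_nhds_zero_of_lt_one q.coe_nonneg (by exact_mod_cast hq2'))

open Filter Topology in
lemma aux_matrix {n : ℕ} (E : Matrix (Fin (n + 1)) (Fin (n + 1)) ℝ) (hE : E.IsHurwitz) :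
    ∃ h : ℝ, 0 < h ∧ ∃ m : ℕ, 1 ≤ m ∧
      ‖(1 + h • Matrix.toEuclideanCLM (n := Fin (n + 1)) (𝕜 := ℝ) E) ^ m‖ ≤ 1 / 2 := by
  set C : Matrix (Fin (n + 1)) (Fin (n + 1)) ℂ := E.map (algebraMap ℝ ℂ) with hC
  have hfin : (spectrum ℂ C).Finite := Matrix.finite_spectrum C
  have hev : ∀ᶠ h : ℝ in 𝓝[>] 0, ∀ μ ∈ spectrum ℂ C, ‖1 + (h : ℂ) * μ‖ < 1 := by
    rw [Filter.eventually_all_finite hfin]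
    intro μ hμ
    have hre := hE μ hμ
    have ht : Tendsto (fun h : ℝ => 2 * μ.re + h * (μ.re ^ 2 + μ.im ^ 2)) (𝓝[>] 0)
        (𝓝 (2 * μ.re + 0 * (μ.re ^ 2 + μ.im ^ 2))) := by
      apply Tendsto.mono_left _ nhdsWithin_le_nhds
      exact Continuous.tendsto (by fun_prop) 0
    have ht2 := ht.eventually_lt_const (u := 0) (by linarith)
    filter_upwards [ht2, self_mem_nhdsWithin] with h hh hpos
    have hpos : 0 < h := hpos
    rw [← sq_lt_one_iff₀ (norm_nonneg _), ← Complex.normSq_eq_norm_sq, Complex.normSq_apply]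
    simp
    nlinarith
  obtain ⟨h, hh, hpos⟩ := (hev.and self_mem_nhdsWithin).exists
  have hpos : 0 < h := hpos
  refine ⟨h, hpos, ?_⟩
  set B : Matrix (Fin (n + 1)) (Fin (n + 1)) ℝ := 1 + h • E with hB
  have hBC : B.map (algebraMap ℝ ℂ) = 1 + (h : ℂ) • C := by
    ext i j
    by_cases hij : i = j <;> simp [hB, hC, hij]
  set Φ := Matrix.toEuclideanCLM (n := Fin (n + 1)) (𝕜 := ℂ)
  have hspec : ∀ z ∈ spectrum ℂ (Φ (1 + (h : ℂ) • C)), ‖z‖ < 1 := by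
    intro z hz
    rw [AlgEquiv.spectrum_eq Φ] at hz
    have hz1 : (z - 1) ∈ spectrum ℂ ((h : ℂ) • C) := by
      rw [spectrum.mem_iff] at hz ⊢
      convert hz using 2
      simp [sub_sub]
    have hu : (h : ℂ) ≠ 0 := by exact_mod_cast hpos.ne'
    have hz2 : (h : ℂ)⁻¹ * (z - 1) ∈ spectrum ℂ C := by
      rw [spectrum.mem_iff] at hz1 ⊢
      intro hU
      apply hz1
      have : algebraMap ℂ (Matrix (Fin (n + 1)) (Fin (n + 1)) ℂ) (z - 1) - (h : ℂ) • C
          = (Units.mk0 (h : ℂ) hu) •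
            (algebraMap ℂ (Matrix (Fin (n + 1)) (Fin (n + 1)) ℂ) ((h : ℂ)⁻¹ * (z - 1)) - C) := by
        rw [Units.smul_def, Units.val_mk0, smul_sub, Algebra.algebraMap_eq_smul_one,
          Algebra.algebraMap_eq_smul_one, smul_smul, mul_inv_cancel_left₀ hu]
      rw [this]
      exact hU.smul _
    have := hh _ hz2
    rwa [mul_inv_cancel_left₀ hu, add_sub_cancel] at this
  have hlim := aux_pow_tendsto _ hspec
  have hlim2 : Tendsto (fun k : ℕ => (1 + (h : ℂ) • C) ^ k) atTop (𝓝 0) := by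
    have hc : Continuous Φ.symm :=
      LinearMap.continuous_of_finiteDimensional
        (Φ.symm.toAlgEquiv.toLinearMap)
    have := (hc.tendsto 0).comp hlim
    simpa [Function.comp_def] using this
  have hlim3 : Tendsto (fun k : ℕ => B ^ k) atTop (𝓝 0) := by
    have hc : Continuous (fun X : Matrix (Fin (n + 1)) (Fin (n + 1)) ℂ => X.map Complex.re) := by
      fun_prop
    have := (hc.tendsto 0).comp hlim2
    have h0 : (0 : Matrix (Fin (n + 1)) (Fin (n + 1)) ℂ).map Complex.re = 0 := by ext; simp
    rw [h0] at this
    refine this.congr fun k => ?_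
    have : (1 + (h : ℂ) • C) ^ k = (B ^ k).map (algebraMap ℝ ℂ) := by
      rw [← hBC, Matrix.map_pow]
    simp only [Function.comp]
    rw [this]
    ext; simp
  have hlim4 : Tendsto (fun k : ℕ => Matrix.toEuclideanCLM (n := Fin (n + 1)) (𝕜 := ℝ) (B ^ k))
      atTop (𝓝 0) := by
    have hc : Continuous (Matrix.toEuclideanCLM (n := Fin (n + 1)) (𝕜 := ℝ)) :=
      LinearMap.continuous_of_finiteDimensional
        (Matrix.toEuclideanCLM (n := Fin (n + 1)) (𝕜 := ℝ)).toAlgEquiv.toLinearMap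
    have := (hc.tendsto 0).comp hlim3
    simpa only [Function.comp_def, map_zero] using this
  have hlim5 := hlim4.norm.eventually_le_const (u := 1 / 2) (by simp)
  obtain ⟨m, hm, hm1⟩ := (hlim5.and (eventually_ge_atTop 1)).exists
  refine ⟨m, hm1, ?_⟩
  simpa [hB] using hm

/-- An adapted norm that `B` contracts. -/
lemma aux_norm {V : Type*} [NormedAddCommGroup V] [NormedSpace ℝ V] (B : V →L[ℝ] V)
    (m : ℕ) (hm : 1 ≤ m) (hB : ‖B ^ m‖ ≤ 1 / 2) :
    ∃ (N : Seminorm ℝ V) (r C : ℝ), r < 1 ∧ 0 < C ∧ (∀ v, ‖v‖ ≤ N v) ∧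
      (∀ v, N v ≤ C * ‖v‖) ∧ ∀ v, N (B v) ≤ r * N v := by
  have hm0 : (1 : ℝ) ≤ m := by exact_mod_cast hm
  set r : ℝ := 1 - 1 / (2 * m) with hr
  have hr1 : r < 1 := by
    have : 0 < 1 / (2 * (m : ℝ)) := by positivity
    linarith
  have hr0 : 0 < r := by
    have : 1 / (2 * (m : ℝ)) ≤ 1 / 2 := by
      apply one_div_le_one_div_of_le <;> linarith
    linarith
  have hrm : 1 / 2 ≤ r ^ m := by
    have := one_add_mul_le_pow (a := -(1 / (2 * (m : ℝ)))) (by linarith) m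
    have e : 1 + (m : ℝ) * -(1 / (2 * (m : ℝ))) = 1 / 2 := by field_simp; norm_num
    rw [e] at this
    simpa [hr, sub_eq_add_neg] using this
  let g : V → ℕ → ℝ := fun v k => r⁻¹ ^ k * ‖(B ^ k) v‖
  have hg0 : ∀ v k, 0 ≤ g v k := fun v k => by positivity
  let N : Seminorm ℝ V := Seminorm.of (fun v => ∑ k ∈ Finset.range m, g v k)
    (fun x y => by
      rw [← Finset.sum_add_distrib]
      refine Finset.sum_le_sum fun k _ => ?_
      simp only [g, map_add]
      rw [← mul_add]
      exact mul_le_mul_of_nonneg_left (norm_add_le _ _) (by positivity))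
    (fun a x => by
      rw [Finset.mul_sum]
      refine Finset.sum_congr rfl fun k _ => ?_
      simp only [g, map_smul, norm_smul]
      ring)
  have hN : ∀ v, N v = ∑ k ∈ Finset.range m, g v k := fun v => rfl
  have hle : ∀ v, ‖v‖ ≤ N v := by
    intro v
    rw [hN]
    have := Finset.single_le_sum (f := g v) (fun k _ => hg0 v k)
      (Finset.mem_range.2 (by omega : 0 < m))
    simpa [g] using this
  refine ⟨N, r, ∑ k ∈ Finset.range m, r⁻¹ ^ k * ‖B ^ k‖ + 1, hr1, by positivity, hle, ?_, ?_⟩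
  · intro v
    rw [hN, add_mul, Finset.sum_mul, one_mul]
    have : ∑ k ∈ Finset.range m, g v k ≤ ∑ k ∈ Finset.range m, r⁻¹ ^ k * ‖B ^ k‖ * ‖v‖ := by
      refine Finset.sum_le_sum fun k _ => ?_
      simp only [g, mul_assoc]
      exact mul_le_mul_of_nonneg_left ((B ^ k).le_opNorm v) (by positivity)
    linarith [norm_nonneg v]
  · intro v
    have h1 : N (B v) = r * ∑ k ∈ Finset.range m, g v (k + 1) := by
      rw [hN, Finset.mul_sum]
      refine Finset.sum_congr rfl fun k _ => ?_
      simp only [g]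
      rw [pow_succ B k, mul_apply_eq_comp, pow_succ]
      field_simp
    have h2 := Finset.sum_range_succ' (g v) m
    rw [Finset.sum_range_succ] at h2
    have h3 : g v m ≤ g v 0 := by
      simp only [g, pow_zero, one_mul, one_apply_eq_self]
      have h4 : ‖(B ^ m) v‖ ≤ 1 / 2 * ‖v‖ :=
        ((B ^ m).le_opNorm v).trans (mul_le_mul_of_nonneg_right hB (norm_nonneg _))
      have h5 : 1 / 2 * ‖v‖ ≤ r ^ m * ‖v‖ := mul_le_mul_of_nonneg_right hrm (norm_nonneg _)
      rw [inv_pow, inv_mul_le_iff₀ (by positivity)]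
      linarith
    rw [h1, hN]
    apply mul_le_mul_of_nonneg_left _ hr0.le
    linarith

open Filter Topology in
lemma aux_ode {V : Type*} [NormedAddCommGroup V] [NormedSpace ℝ V] (A : V →L[ℝ] V)
    (N : Seminorm ℝ V) (r C h : ℝ) (hr : r < 1) (hC : 0 < C) (hh : 0 < h)
    (hNC : ∀ v, N v ≤ C * ‖v‖) (hNB : ∀ v, N (v + h • A v) ≤ r * N v)
    (ε N₀ : ℝ) (hε : 0 < ε) (η d : ℝ → V)
    (hode : ∀ t : ℝ, 0 ≤ t →
      HasDerivWithinAt η (ε⁻¹ • A (η t) + d t) (Set.Ici (0 : ℝ)) t)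
    (hd : ∀ t : ℝ, 0 ≤ t → ‖d t‖ ≤ N₀) (t : ℝ) (ht : 0 ≤ t) :
    N (η t) ≤ C * ‖η 0‖ * Real.exp (-((1 - r) / h * t / ε)) + C * N₀ / ((1 - r) / h) * ε := by
  have hα : 0 < (1 - r) / h := div_pos (by linarith) hh
  set α := (1 - r) / h with hαdef
  have hN₀ : 0 ≤ N₀ := (norm_nonneg _).trans (hd 0 le_rfl)
  have hlip : ∀ x y, |N x - N y| ≤ C * ‖x - y‖ := fun x y =>
    (abs_sub_map_le_sub N x y).trans (hNC _)
  have hNcont : Continuous N := by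
    have : LipschitzWith ⟨C, hC.le⟩ N := LipschitzWith.of_dist_le_mul fun x y => by
      rw [Real.dist_eq, dist_eq_norm]; exact hlip x y
    exact this.continuous
  have key := le_gronwallBound_of_liminf_deriv_right_le (f := fun t => N (η t))
    (f' := fun t => -(α / ε) * N (η t) + C * N₀) (δ := C * ‖η 0‖) (K := -(α / ε))
    (ε := C * N₀) (a := 0) (b := t) ?_ ?_ (hNC _) (fun x _ => le_rfl) t ⟨ht, le_rfl⟩
  · rw [gronwallBound_of_K_ne_0 (by have := div_pos hα hε; linarith)] at key
    simp only [sub_zero] at key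
    have e1 : -(α / ε) * t = -(α * t / ε) := by ring
    have e2 : C * N₀ / -(α / ε) = - (C * N₀ / α * ε) := by field_simp
    rw [e1, e2] at key
    have : 0 ≤ C * N₀ / α * ε * Real.exp (-(α * t / ε)) := by positivity
    linarith
  · intro s hs
    apply hNcont.continuousAt.comp_continuousWithinAt
    exact (hode s hs.1).continuousWithinAt.mono fun x hx => hx.1
  · intro x hx ρ hρ
    apply Eventually.frequently
    have hder := (hode x hx.1).mono (s := Set.Ioi x)
      (fun y hy => hx.1.trans (le_of_lt (Set.mem_Ioi.1 hy)))
    rw [hasDerivWithinAt_iff_isLittleO] at hder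
    have hγ : 0 < (ρ - (-(α / ε) * N (η x) + C * N₀)) / (2 * C) := by
      apply div_pos <;> linarith
    have hs := hder.def hγ
    have hsmall : ∀ᶠ z in 𝓝[>] x, z < x + ε * h :=
      Tendsto.eventually_lt_const (by have := mul_pos hε hh; linarith)
        (tendsto_id.mono_left nhdsWithin_le_nhds)
    filter_upwards [hs, hsmall, self_mem_nhdsWithin] with z hz hzs hzx
    have hzx : 0 < z - x := sub_pos.2 hzx
    rw [Real.norm_of_nonneg hzx.le] at hz
    set D := ε⁻¹ • A (η x) + d x
    set s := (z - x) / (ε * h) with hsdef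
    have hs0 : 0 < s := by positivity
    have hs1 : s ≤ 1 := by
      rw [hsdef, div_le_one (by positivity)]; linarith
    have hexp : η x + (z - x) • D = ((1 - s) • η x + s • (η x + h • A (η x))) + (z - x) • d x := by
      have : (z - x) * ε⁻¹ = s * h := by rw [hsdef]; field_simp
      simp only [D, smul_add, smul_smul, this]
      module
    have h1 : N (η x + (z - x) • D) ≤ (1 - s) * N (η x) + s * (r * N (η x)) + (z - x) * (C * N₀) := by
      rw [hexp]
      refine (map_add_le_add N _ _).trans (add_le_add ((map_add_le_add N _ _).trans
        (add_le_add ?_ ?_)) ?_)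
      · rw [map_smul_eq_mul, Real.norm_of_nonneg (by linarith)]
      · rw [map_smul_eq_mul, Real.norm_of_nonneg hs0.le]
        exact mul_le_mul_of_nonneg_left (hNB _) hs0.le
      · rw [map_smul_eq_mul, Real.norm_of_nonneg hzx.le]
        exact mul_le_mul_of_nonneg_left ((hNC _).trans
          (mul_le_mul_of_nonneg_left (hd x hx.1) hC.le)) hzx.le
    have h2 := (le_abs_self _).trans (hlip (η z) (η x + (z - x) • D))
    have h3 : η z - (η x + (z - x) • D) = η z - η x - (z - x) • D := by abel
    rw [h3] at h2
    have h4 := mul_le_mul_of_nonneg_left hz hC.le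
    have e5 : s * (1 - r) = (z - x) * (α / ε) := by rw [hsdef, hαdef]; field_simp
    have e6 : C * ((ρ - (-(α / ε) * N (η x) + C * N₀)) / (2 * C) * (z - x))
      = (z - x) * ((ρ - (-(α / ε) * N (η x) + C * N₀)) / 2) := by field_simp
    rw [e6] at h4
    rw [inv_mul_lt_iff₀ hzx]
    have h7 : (z - x) * ((ρ - (-(α / ε) * N (η x) + C * N₀)) / 2) <
       (z - x) * (ρ - (-(α / ε) * N (η x) + C * N₀)) := by
      apply mul_lt_mul_of_pos_left _ hzx
      linarith
    have e8 : (1 - s) * N (η x) + s * (r * N (η x)) = N (η x) - (z - x) * (α / ε) * N (η x) := by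
      rw [← e5]; ring
    rw [e8] at h1
    have e9 : (z - x) * (ρ - (-(α / ε) * N (η x) + C * N₀)) =
      (z - x) * ρ + (z - x) * (α / ε) * N (η x) - (z - x) * (C * N₀) := by ring
    linarith

/-- Scaled-error form of the state-estimation conclusion (10) of Theorem 1:
the scaled observer error dynamics is a fast Hurwitz linear system perturbed by a
bounded disturbance, and the error becomes smaller than any prescribed `σ` after any
prescribed time `T₀` for all sufficiently small `ε`. -/
theorem stmt0 (n : ℕ) (hn : 1 ≤ n)
    (E : Matrix (Fin (n + 1)) (Fin (n + 1)) ℝ) (hE : E.IsHurwitz)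
    (N₀ M : ℝ) (hN₀ : 0 < N₀) (hM : 0 < M)
    (η d : ℝ → ℝ → EuclideanSpace ℝ (Fin (n + 1)))
    (hsmooth : ∀ ε : ℝ, ε ∈ Set.Ioo (0 : ℝ) 1 →
      ContDiffOn ℝ 1 (η ε) (Set.Ici (0 : ℝ)))
    (hode : ∀ ε : ℝ, ε ∈ Set.Ioo (0 : ℝ) 1 → ∀ t : ℝ, 0 ≤ t →
      HasDerivWithinAt (η ε)
        (ε⁻¹ • (Matrix.toEuclideanLin E (η ε t)) + d ε t) (Set.Ici (0 : ℝ)) t)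
    (hd : ∀ ε : ℝ, ε ∈ Set.Ioo (0 : ℝ) 1 → ∀ t : ℝ, 0 ≤ t → ‖d ε t‖ ≤ N₀)
    (hη0 : ∀ ε : ℝ, ε ∈ Set.Ioo (0 : ℝ) 1 → ‖η ε 0‖ ≤ M * ε ^ (-(n : ℤ))) :
    ∀ σ : ℝ, 0 < σ → ∀ T₀ : ℝ, 0 < T₀ →
      ∃ εstar : ℝ, εstar ∈ Set.Ioo (0 : ℝ) 1 ∧
        ∀ ε : ℝ, 0 < ε → ε < εstar → ∀ t : ℝ, T₀ ≤ t → ‖η ε t‖ ≤ σ := by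
  intro σ hσ T₀ hT₀
  obtain ⟨h, hh, m, hm, hBm⟩ := aux_matrix E hE
  set A := Matrix.toEuclideanCLM (n := Fin (n + 1)) (𝕜 := ℝ) E with hA
  obtain ⟨N, r, C, hr, hC, hN1, hNC, hNB⟩ := aux_norm _ m hm hBm
  have hα : 0 < (1 - r) / h := div_pos (by linarith) hh
  set α := (1 - r) / h with hαdef
  have hb : 0 < α * T₀ := mul_pos hα hT₀
  have hlim : Filter.Tendsto (fun ε : ℝ => C * M * (α * T₀)⁻¹ ^ n *
      ((α * T₀ * ε⁻¹) ^ n * Real.exp (-(α * T₀ * ε⁻¹))) + C * N₀ / α * ε)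
      (nhdsWithin 0 (Set.Ioi 0)) (nhds 0) := by
    have h1 : Filter.Tendsto (fun ε : ℝ => α * T₀ * ε⁻¹) (nhdsWithin 0 (Set.Ioi 0)) Filter.atTop :=
      Filter.Tendsto.const_mul_atTop hb tendsto_inv_nhdsGT_zero
    have h2 := ((Real.tendsto_pow_mul_exp_neg_atTop_nhds_zero n).comp h1).const_mul
      (C * M * (α * T₀)⁻¹ ^ n)
    have h3 : Filter.Tendsto (fun ε : ℝ => C * N₀ / α * ε) (nhdsWithin 0 (Set.Ioi 0))
        (nhds (C * N₀ / α * 0)) :=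
      (Continuous.tendsto (by fun_prop) 0).mono_left nhdsWithin_le_nhds
    simpa [Function.comp_def] using h2.add h3
  have hev := hlim.eventually_le_const hσ
  rw [Filter.Eventually, mem_nhdsGT_iff_exists_Ioo_subset] at hev
  obtain ⟨u, hu0, hu⟩ := hev
  have hu0 : 0 < u := hu0
  refine ⟨min u (1 / 2), ⟨by positivity, lt_of_le_of_lt (min_le_right _ _) (by norm_num)⟩, ?_⟩
  intro ε hε hεs t ht
  have hε1 : ε ∈ Set.Ioo (0 : ℝ) 1 :=
    ⟨hε, by have := lt_of_lt_of_le hεs (min_le_right _ _); linarith⟩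
  have hb1 : _ ≤ σ := hu ⟨hε, lt_of_lt_of_le hεs (min_le_left _ _)⟩
  have key := aux_ode A N r C h hr hC hh hNC (fun v => by simpa using hNB v) ε N₀ hε (η ε) (d ε)
    (hode ε hε1) (hd ε hε1) t (hT₀.le.trans ht)
  rw [← hαdef] at key
  refine (hN1 _).trans (key.trans (le_trans ?_ hb1))
  refine add_le_add ?_ le_rfl
  have e1 : C * M * (α * T₀)⁻¹ ^ n * ((α * T₀ * ε⁻¹) ^ n * Real.exp (-(α * T₀ * ε⁻¹)))
      = C * (M * ε ^ (-(n : ℤ))) * Real.exp (-(α * T₀ / ε)) := by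
    rw [zpow_neg, zpow_natCast, mul_pow, inv_pow, inv_pow, div_eq_mul_inv]
    field_simp
  rw [e1]
  have hexp : Real.exp (-(α * t / ε)) ≤ Real.exp (-(α * T₀ / ε)) := by
    apply Real.exp_le_exp.2
    apply neg_le_neg
    gcongr
  have := hη0 ε hε1
  gcongr
end

section
/- Let E be an (n+1)×(n+1) real matrix and P a real symmetric positive definite (n+1)×(n+1) matrix with P E + Eᵀ P = −I; set α₁ = λ_min(P) and α₂ = λ_max(P). Let ε > 0 and N₀ > 0, and let η : [0,∞) → ℝ^{n+1} be differentiable with η'(t) = ε⁻¹ E η(t) + d(t) and ‖d(t)‖ ≤ N₀ for all t. Then for all t ≥ 0: ‖η(t)‖ ≤ √(α₂/α₁) ‖η(0)‖ e^{−t/(2α₂ε)} + 2 α₂² N₀ ε / α₁. (This is the explicit bound (16) in the proof of Theorem 1.) -/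
open scoped RealInnerProductSpace

section helpers
variable {m : Type*} [Fintype m] [DecidableEq m]

lemma aux_symm (P : Matrix m m ℝ) (hP : P.IsHermitian) (x y : EuclideanSpace ℝ m) :
    ⟪Matrix.toEuclideanLin P x, y⟫ = ⟪x, Matrix.toEuclideanLin P y⟫ :=
  (Matrix.isSymmetric_toEuclideanLin_iff.2 hP) x y

lemma aux_coord (P : Matrix m m ℝ) (hP : P.IsHermitian) (x : EuclideanSpace ℝ m) (i : m) :
    ⟪hP.eigenvectorBasis i, Matrix.toEuclideanLin P x⟫
      = hP.eigenvalues i * ⟪hP.eigenvectorBasis i, x⟫ := by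
  rw [← aux_symm P hP]
  have : Matrix.toEuclideanLin P (hP.eigenvectorBasis i)
      = hP.eigenvalues i • hP.eigenvectorBasis i := by
    ext j
    have := congrFun (hP.mulVec_eigenvectorBasis i) j
    simpa using this
  rw [this, real_inner_smul_left]

lemma aux_quad (P : Matrix m m ℝ) (hP : P.IsHermitian) (x : EuclideanSpace ℝ m) :
    ⟪x, Matrix.toEuclideanLin P x⟫
      = ∑ i, hP.eigenvalues i * ⟪hP.eigenvectorBasis i, x⟫ ^ 2 := by
  rw [← hP.eigenvectorBasis.sum_inner_mul_inner]
  refine Finset.sum_congr rfl fun i _ => ?_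
  rw [aux_coord, real_inner_comm]
  ring

lemma aux_normsq (P : Matrix m m ℝ) (hP : P.IsHermitian) (x : EuclideanSpace ℝ m) :
    ‖x‖ ^ 2 = ∑ i, ⟪hP.eigenvectorBasis i, x⟫ ^ 2 := by
  rw [← hP.eigenvectorBasis.sum_sq_norm_inner_right x]
  simp

lemma aux_lower (P : Matrix m m ℝ) (hP : P.IsHermitian) (a : ℝ)
    (ha : ∀ i, a ≤ hP.eigenvalues i) (x : EuclideanSpace ℝ m) :
    a * ‖x‖ ^ 2 ≤ ⟪x, Matrix.toEuclideanLin P x⟫ := by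
  rw [aux_quad P hP, aux_normsq P hP, Finset.mul_sum]
  exact Finset.sum_le_sum fun i _ => mul_le_mul_of_nonneg_right (ha i) (sq_nonneg _)

lemma aux_upper (P : Matrix m m ℝ) (hP : P.IsHermitian) (a : ℝ)
    (ha : ∀ i, hP.eigenvalues i ≤ a) (x : EuclideanSpace ℝ m) :
    ⟪x, Matrix.toEuclideanLin P x⟫ ≤ a * ‖x‖ ^ 2 := by
  rw [aux_quad P hP, aux_normsq P hP, Finset.mul_sum]
  exact Finset.sum_le_sum fun i _ => mul_le_mul_of_nonneg_right (ha i) (sq_nonneg _)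

lemma aux_norm_s5 (P : Matrix m m ℝ) (hP : P.IsHermitian) (a : ℝ) (ha0 : 0 ≤ a)
    (h0 : ∀ i, 0 ≤ hP.eigenvalues i)
    (ha : ∀ i, hP.eigenvalues i ≤ a) (x : EuclideanSpace ℝ m) :
    ‖Matrix.toEuclideanLin P x‖ ≤ a * ‖x‖ := by
  refine le_of_sq_le_sq ?_ (by positivity)
  rw [mul_pow, aux_normsq P hP, aux_normsq P hP x, Finset.mul_sum]
  refine Finset.sum_le_sum fun i _ => ?_
  rw [aux_coord, mul_pow]
  exact mul_le_mul_of_nonneg_right (pow_le_pow_left₀ (h0 i) (ha i) 2) (sq_nonneg _)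

lemma aux_lyap (E P : Matrix m m ℝ) (hP : P.IsHermitian)
    (hLyap : P * E + E.transpose * P = -(1 : Matrix m m ℝ)) (x : EuclideanSpace ℝ m) :
    2 * ⟪Matrix.toEuclideanLin E x, Matrix.toEuclideanLin P x⟫ = - ‖x‖ ^ 2 := by
  have h1 : ⟪x, Matrix.toEuclideanLin (P * E + E.transpose * P) x⟫ = - ‖x‖ ^ 2 := by
    rw [hLyap, map_neg]
    have : Matrix.toEuclideanLin (1 : Matrix m m ℝ) x = x := by
      ext j; simp
    rw [LinearMap.neg_apply, this, inner_neg_right, real_inner_self_eq_norm_sq]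
  have h2 : Matrix.toEuclideanLin (P * E) x
      = Matrix.toEuclideanLin P (Matrix.toEuclideanLin E x) := by
    ext j; simp [Matrix.mulVec_mulVec]
  have h3 : Matrix.toEuclideanLin (E.transpose * P) x
      = Matrix.toEuclideanLin E.transpose (Matrix.toEuclideanLin P x) := by
    ext j; simp [Matrix.mulVec_mulVec]
  have h4 : ⟪x, Matrix.toEuclideanLin E.transpose (Matrix.toEuclideanLin P x)⟫
      = ⟪Matrix.toEuclideanLin E x, Matrix.toEuclideanLin P x⟫ := by
    have : E.transpose = E.conjTranspose := by simp
    rw [this, Matrix.toEuclideanLin_conjTranspose_eq_adjoint, LinearMap.adjoint_inner_right]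
  rw [map_add, LinearMap.add_apply, inner_add_right, h2, h3, h4, ← aux_symm P hP,
    real_inner_comm] at h1
  linarith

end helpers


/-- The explicit bound (16) in the proof of Theorem 1: if `P` is a symmetric positive
definite solution of `P E + Eᵀ P = −I` with minimal eigenvalue `α₁` and maximal
eigenvalue `α₂`, and `η` solves `η' = ε⁻¹ E η + d` with `‖d(t)‖ ≤ N₀`, then
`‖η(t)‖ ≤ √(α₂/α₁) ‖η(0)‖ e^{−t/(2α₂ε)} + 2 α₂² N₀ ε / α₁` for all `t ≥ 0`. -/
theorem stmt5 (n : ℕ) (E P : Matrix (Fin (n + 1)) (Fin (n + 1)) ℝ)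
    (hPsymm : P.IsSymm) (hPpd : P.PosDef) (hP : P.IsHermitian)
    (hLyap : P * E + E.transpose * P = -(1 : Matrix (Fin (n + 1)) (Fin (n + 1)) ℝ))
    (α₁ α₂ : ℝ)
    (hα₁ : IsLeast {r : ℝ | ∃ i, hP.eigenvalues i = r} α₁)
    (hα₂ : IsGreatest {r : ℝ | ∃ i, hP.eigenvalues i = r} α₂)
    (ε N₀ : ℝ) (hε : 0 < ε) (hN₀ : 0 < N₀)
    (η d : ℝ → EuclideanSpace ℝ (Fin (n + 1)))
    (hη : ∀ t : ℝ, 0 ≤ t →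
      HasDerivWithinAt η (ε⁻¹ • (Matrix.toEuclideanLin E (η t)) + d t)
        (Set.Ici (0 : ℝ)) t)
    (hd : ∀ t : ℝ, 0 ≤ t → ‖d t‖ ≤ N₀) :
    ∀ t : ℝ, 0 ≤ t →
      ‖η t‖ ≤ Real.sqrt (α₂ / α₁) * ‖η 0‖ * Real.exp (-t / (2 * α₂ * ε))
        + 2 * α₂ ^ 2 * N₀ * ε / α₁ := by
  obtain ⟨⟨i₁, hi₁⟩, hmin⟩ := hα₁
  obtain ⟨⟨i₂, hi₂⟩, hmax⟩ := hα₂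
  have hpos : ∀ i, 0 < hP.eigenvalues i := fun i => hPpd.eigenvalues_pos i
  have h1 : 0 < α₁ := hi₁ ▸ hpos i₁
  have h2 : 0 < α₂ := hi₂ ▸ hpos i₂
  have hlo : ∀ i, α₁ ≤ hP.eigenvalues i := fun i => hmin ⟨i, rfl⟩
  have hhi : ∀ i, hP.eigenvalues i ≤ α₂ := fun i => hmax ⟨i, rfl⟩
  set L := Matrix.toEuclideanLin P with hL
  set V : ℝ → ℝ := fun t => ⟪η t, L (η t)⟫ with hV
  set V' : ℝ → ℝ := fun t =>
    2 * ⟪ε⁻¹ • (Matrix.toEuclideanLin E (η t)) + d t, L (η t)⟫ with hV'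
  have hVd : ∀ t, 0 ≤ t → HasDerivWithinAt V (V' t) (Set.Ici 0) t := by
    intro t ht
    have e1 := hη t ht
    have e2 := (LinearMap.toContinuousLinearMap L).hasFDerivAt.comp_hasDerivWithinAt t e1
    have e3 := e1.inner ℝ e2
    refine e3.congr_deriv ?_
    simp only [hV', LinearMap.coe_toContinuousLinearMap', Function.comp]
    rw [← aux_symm P hP, real_inner_comm, ← hL]
    rw [real_inner_comm]
    ring
  have hVb : ∀ t, 0 ≤ t → V' t ≤ - ‖η t‖ ^ 2 / ε + 2 * α₂ * N₀ * ‖η t‖ := by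
    intro t ht
    have e1 := aux_lyap E P hP hLyap (η t)
    have e2 : ⟪d t, L (η t)⟫ ≤ N₀ * (α₂ * ‖η t‖) :=
      (real_inner_le_norm _ _).trans (mul_le_mul (hd t ht)
        (aux_norm_s5 P hP α₂ h2.le (fun i => (hpos i).le) hhi _) (norm_nonneg _) hN₀.le)
    have e3 : V' t = ε⁻¹ * (2 * ⟪Matrix.toEuclideanLin E (η t), L (η t)⟫)
        + 2 * ⟪d t, L (η t)⟫ := by
      simp only [hV', inner_add_left, real_inner_smul_left]; ring
    rw [e3, e1, div_eq_inv_mul]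
    linarith
  obtain ⟨s, hs, hss⟩ : ∃ s : ℝ, 0 < s ∧ s ^ 2 = α₁ :=
    ⟨√α₁, Real.sqrt_pos.2 h1, Real.sq_sqrt h1.le⟩
  obtain ⟨r, hr, hrr⟩ : ∃ r : ℝ, 0 < r ∧ r ^ 2 = α₂ :=
    ⟨√α₂, Real.sqrt_pos.2 h2, Real.sq_sqrt h2.le⟩
  have hsq : Real.sqrt (α₂ / α₁) = r / s := by
    rw [← hss, ← hrr, ← div_pow, Real.sqrt_sq (by positivity)]
  set k : ℝ := 1 / (2 * α₂ * ε) with hk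
  have hkpos : 0 < k := by positivity
  have key : ∀ c, 2 * α₂ ^ 2 * N₀ * ε / s < c → ∀ t, 0 ≤ t →
      V t ≤ (r * ‖η 0‖ * Real.exp (-t / (2 * α₂ * ε)) + c) ^ 2 := by
    intro c hc T hT
    have hc0 : 0 < c := lt_trans (by positivity) hc
    set U : ℝ → ℝ := fun t => r * ‖η 0‖ * Real.exp (-t / (2 * α₂ * ε)) + c with hU
    have hUd : ∀ t, HasDerivAt U (-k * (U t - c)) t := by
      intro t
      have e := ((((hasDerivAt_id t).neg.div_const (2 * α₂ * ε)).exp).const_mul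
        (r * ‖η 0‖)).add_const c
      refine e.congr_deriv ?_
      simp only [hU, hk, id, Pi.neg_apply]
      ring
    have hUpos : ∀ t, 0 < U t := fun t => by simp only [hU]; positivity
    have hU2 : ∀ t, HasDerivAt (fun t => U t ^ 2) (2 * U t * (-k * (U t - c))) t := by
      intro t
      refine ((hUd t).pow 2).congr_deriv ?_
      simp
    refine image_le_of_deriv_right_lt_deriv_boundary (f := V) (f' := V') (a := 0) (b := T)
      (fun t ht => ((hVd t ht.1).continuousWithinAt).mono Set.Icc_subset_Ici_self)
      (fun t ht => (hVd t ht.1).mono (Set.Ici_subset_Ici.2 ht.1)) ?_ hU2 ?_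
      (Set.right_mem_Icc.2 hT)
    · have e := aux_upper P hP α₂ hhi (η 0)
      have : U 0 = r * ‖η 0‖ + c := by simp [hU]
      rw [this]
      refine e.trans ?_
      rw [← hrr]
      have := norm_nonneg (η 0)
      have : 0 ≤ r * ‖η 0‖ := by positivity
      nlinarith
    · intro t ht heq
      have hu := hUpos t
      have e1 := aux_lower P hP α₁ hlo (η t)
      have e2 := aux_upper P hP α₂ hhi (η t)
      have heq' : ⟪η t, Matrix.toEuclideanLin P (η t)⟫ = U t ^ 2 := heq
      rw [heq'] at e1 e2
      have e3 : ‖η t‖ ≤ U t / s := by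
        rw [le_div_iff₀ hs]
        refine le_of_sq_le_sq ?_ hu.le
        rw [mul_pow, hss]; linarith
      have e4 : U t ^ 2 / α₂ ≤ ‖η t‖ ^ 2 := by
        rw [div_le_iff₀ h2]; linarith
      refine (hVb t ht.1).trans_lt ?_
      have e5 : - ‖η t‖ ^ 2 / ε ≤ - (U t ^ 2 / α₂) / ε := by gcongr
      have e6 : 2 * α₂ * N₀ * ‖η t‖ ≤ 2 * α₂ * N₀ * (U t / s) := by gcongr
      have e7 : 2 * U t * k * (2 * α₂ ^ 2 * N₀ * ε / s) < 2 * U t * k * c := by gcongr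
      have e8 : 2 * U t * k * (2 * α₂ ^ 2 * N₀ * ε / s) = 2 * α₂ * N₀ * (U t / s) := by
        rw [hk]; field_simp
      have e9 : - (U t ^ 2 / α₂) / ε = - (2 * U t * k * U t) := by
        rw [hk]; field_simp
      linarith
  intro t ht
  have fin : ∀ c, 2 * α₂ ^ 2 * N₀ * ε / s < c →
      s * ‖η t‖ - r * ‖η 0‖ * Real.exp (-t / (2 * α₂ * ε)) ≤ c := by
    intro c hc
    have hc0 : 0 < c := lt_trans (by positivity) hc
    have e1 := aux_lower P hP α₁ hlo (η t)
    have e2 : s * ‖η t‖ ≤ r * ‖η 0‖ * Real.exp (-t / (2 * α₂ * ε)) + c := by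
      refine le_of_sq_le_sq ?_ (by positivity)
      rw [mul_pow, hss]
      exact e1.trans (key c hc t ht)
    linarith
  have f := le_of_forall_gt_imp_ge_of_dense fin
  rw [hsq]
  have g : r / s * ‖η 0‖ * Real.exp (-t / (2 * α₂ * ε)) + 2 * α₂ ^ 2 * N₀ * ε / α₁
      = (r * ‖η 0‖ * Real.exp (-t / (2 * α₂ * ε)) + 2 * α₂ ^ 2 * N₀ * ε / s) / s := by
    rw [← hss]; field_simp
  rw [g, le_div_iff₀ hs]
  linarith
end

section
/- Let Γ be an m×m real symmetric positive definite matrix with smallest eigenvalue γ₁ > 0 and largest eigenvalue γ₂, let v : [0,∞) → ℝᵐ be continuous, let v₁, …, v_p ∈ ℝᵐ be fixed vectors such that Ψ = Σ_{j=1}^{p} vⱼvⱼᵀ has λ_min(Ψ) = λ > 0, and let W̃ : [0,∞) → ℝᵐ be continuously differentiable with W̃'(t) = −Γ ( v(t)v(t)ᵀ + Ψ ) W̃(t) for all t ≥ 0. Then for all t ≥ 0: ‖W̃(t)‖ ≤ √(γ₂/γ₁) ‖W̃(0)‖ e^{−λ γ₁ t}. In particular W̃(t) → 0 exponentially. -/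
open Matrix in
lemma aux_adj {m : ℕ} (A : Matrix (Fin m) (Fin m) ℝ) (hA : A.IsHermitian)
    (x y : EuclideanSpace ℝ (Fin m)) :
    inner ℝ (toEuclideanLin A x) y = inner ℝ x (toEuclideanLin A y) :=
  (Matrix.isSymmetric_toEuclideanLin_iff.mpr hA) x y

open Matrix in
lemma aux_coord_s12 {m : ℕ} (A : Matrix (Fin m) (Fin m) ℝ) (hA : A.IsHermitian)
    (x : EuclideanSpace ℝ (Fin m)) (i : Fin m) :
    inner ℝ (hA.eigenvectorBasis i) (toEuclideanLin A x)
      = hA.eigenvalues i * inner ℝ (hA.eigenvectorBasis i) x := by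
  rw [← aux_adj A hA]
  have h : toEuclideanLin A (hA.eigenvectorBasis i)
      = hA.eigenvalues i • hA.eigenvectorBasis i := by
    apply (WithLp.ofLp_injective 2)
    have := hA.mulVec_eigenvectorBasis i
    simpa [Matrix.toLpLin_apply] using this
  rw [h, inner_smul_left]
  simp

open Matrix in
lemma aux_quad_s12 {m : ℕ} (A : Matrix (Fin m) (Fin m) ℝ) (hA : A.IsHermitian)
    (x : EuclideanSpace ℝ (Fin m)) :
    inner ℝ x (toEuclideanLin A x)
      = ∑ i, hA.eigenvalues i * (inner ℝ (hA.eigenvectorBasis i) x) ^ 2 := by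
  rw [← hA.eigenvectorBasis.sum_inner_mul_inner]
  refine Finset.sum_congr rfl fun i _ => ?_
  rw [aux_coord_s12, real_inner_comm]
  ring

lemma aux_norm_s12 {m : ℕ} (A : Matrix (Fin m) (Fin m) ℝ) (hA : A.IsHermitian)
    (x : EuclideanSpace ℝ (Fin m)) :
    ‖x‖ ^ 2 = ∑ i, (inner ℝ (hA.eigenvectorBasis i) x) ^ 2 := by
  rw [← real_inner_self_eq_norm_sq, ← hA.eigenvectorBasis.sum_inner_mul_inner]
  refine Finset.sum_congr rfl fun i _ => ?_
  rw [real_inner_comm]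
  ring

open Matrix in
lemma aux_vec {m : ℕ} (u : Fin m → ℝ) (x : EuclideanSpace ℝ (Fin m)) :
    0 ≤ inner ℝ x (toEuclideanLin (vecMulVec u u) x) := by
  have : inner ℝ x (toEuclideanLin (vecMulVec u u) x) = (u ⬝ᵥ x.ofLp) ^ 2 := by
    simp [Matrix.toLpLin_apply, EuclideanSpace.inner_eq_star_dotProduct, Matrix.vecMulVec_mulVec,
      dotProduct_comm]
    ring
  rw [this]
  positivity

/-- Idealized (exact-state-data) form of the concurrent-learning parameter error
dynamics in the proof of Theorem 1: if `Γ` is symmetric positive definite with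
eigenvalues in `[γ₁, γ₂]` (`γ₁` smallest, `γ₂` largest), `Ψ = Σⱼ vⱼvⱼᵀ` has
`λ_min(Ψ) = λ > 0`, and `W̃' = −Γ(v(t)v(t)ᵀ + Ψ)W̃`, then
`‖W̃(t)‖ ≤ √(γ₂/γ₁) ‖W̃(0)‖ e^{−λγ₁t}`; in particular `W̃ → 0` exponentially. -/
theorem stmt12 (m p : ℕ) (Γ : Matrix (Fin m) (Fin m) ℝ)
    (hΓherm : Γ.IsHermitian) (hΓpd : Γ.PosDef)
    (γ₁ γ₂ : ℝ)
    (hγ₁ : IsLeast {r : ℝ | ∃ i, hΓherm.eigenvalues i = r} γ₁)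
    (hγ₂ : IsGreatest {r : ℝ | ∃ i, hΓherm.eigenvalues i = r} γ₂)
    (hγ₁pos : 0 < γ₁)
    (v : ℝ → (Fin m → ℝ)) (hv : Continuous v)
    (vj : Fin p → (Fin m → ℝ))
    (Ψ : Matrix (Fin m) (Fin m) ℝ)
    (hΨ : Ψ = ∑ j : Fin p, Matrix.vecMulVec (vj j) (vj j))
    (hΨherm : Ψ.IsHermitian)
    (lam : ℝ) (hlam : IsLeast {r : ℝ | ∃ i, hΨherm.eigenvalues i = r} lam)
    (hlampos : 0 < lam)
    (W : ℝ → EuclideanSpace ℝ (Fin m))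
    (hW : ∀ t : ℝ, 0 ≤ t → HasDerivWithinAt W
      (-(Matrix.toEuclideanLin (Γ * (Matrix.vecMulVec (v t) (v t) + Ψ)) (W t)))
      (Set.Ici (0 : ℝ)) t) :
    ∀ t : ℝ, 0 ≤ t →
      ‖W t‖ ≤ Real.sqrt (γ₂ / γ₁) * ‖W 0‖ * Real.exp (-(lam * γ₁) * t) := by
  have hdet : IsUnit Γ.det := hΓpd.det_pos.ne'.isUnit
  have hGh : (Γ⁻¹).IsHermitian := hΓherm.inv
  set G : EuclideanSpace ℝ (Fin m) →L[ℝ] EuclideanSpace ℝ (Fin m) :=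
    (Matrix.toEuclideanLin Γ⁻¹).toContinuousLinearMap with hG
  have hGa : ∀ x, G x = Matrix.toEuclideanLin Γ⁻¹ x := fun x => rfl
  have hcomp : ∀ (A B : Matrix (Fin m) (Fin m) ℝ) (x : EuclideanSpace ℝ (Fin m)),
      Matrix.toEuclideanLin A (Matrix.toEuclideanLin B x) = Matrix.toEuclideanLin (A * B) x := by
    intro A B x
    simp [Matrix.toLpLin_apply, Matrix.mulVec_mulVec]
  have hΓG : ∀ x, Matrix.toEuclideanLin Γ (G x) = x := by
    intro x
    rw [hGa, hcomp, Matrix.mul_nonsing_inv _ hdet]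
    simp [Matrix.toLpLin_apply]
  have e1 : ∀ i, γ₁ ≤ hΓherm.eigenvalues i := fun i => hγ₁.2 ⟨i, rfl⟩
  have e2 : ∀ i, hΓherm.eigenvalues i ≤ γ₂ := fun i => hγ₂.2 ⟨i, rfl⟩
  have e3 : ∀ i, lam ≤ hΨherm.eigenvalues i := fun i => hlam.2 ⟨i, rfl⟩
  have hγ₂pos : 0 < γ₂ := by
    obtain ⟨i, hi⟩ := hγ₁.1
    have := e2 i
    linarith
  have b1 : ∀ x, γ₁ * inner ℝ x (G x) ≤ ‖x‖ ^ 2 := by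
    intro x
    obtain ⟨y, hy⟩ : ∃ y, y = G x := ⟨_, rfl⟩
    have hx : x = Matrix.toEuclideanLin Γ y := by rw [hy, hΓG]
    rw [← hy, real_inner_comm, hx, aux_quad_s12 Γ hΓherm, aux_norm_s12 Γ hΓherm, Finset.mul_sum]
    refine Finset.sum_le_sum fun i _ => ?_
    rw [aux_coord_s12, mul_pow, ← mul_assoc]
    refine mul_le_mul_of_nonneg_right ?_ (sq_nonneg _)
    have := e1 i
    nlinarith
  have b2 : ∀ x, ‖x‖ ^ 2 ≤ γ₂ * inner ℝ x (G x) := by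
    intro x
    obtain ⟨y, hy⟩ : ∃ y, y = G x := ⟨_, rfl⟩
    have hx : x = Matrix.toEuclideanLin Γ y := by rw [hy, hΓG]
    rw [← hy, real_inner_comm, hx, aux_quad_s12 Γ hΓherm, aux_norm_s12 Γ hΓherm, Finset.mul_sum]
    refine Finset.sum_le_sum fun i _ => ?_
    rw [aux_coord_s12, mul_pow, ← mul_assoc]
    refine mul_le_mul_of_nonneg_right ?_ (sq_nonneg _)
    have := e1 i
    have := e2 i
    nlinarith
  have b3 : ∀ x, lam * ‖x‖ ^ 2 ≤ inner ℝ x (Matrix.toEuclideanLin Ψ x) := by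
    intro x
    rw [aux_quad_s12 Ψ hΨherm, aux_norm_s12 Ψ hΨherm, Finset.mul_sum]
    exact Finset.sum_le_sum fun i _ => mul_le_mul_of_nonneg_right (e3 i) (sq_nonneg _)
  -- the Lyapunov function and its derivative
  have hV : ∀ t, 0 ≤ t → HasDerivWithinAt
      (fun s => inner ℝ (W s) (G (W s)) * Real.exp (2 * (lam * γ₁) * s))
      ((-2 * inner ℝ (W t)
        (Matrix.toEuclideanLin (Matrix.vecMulVec (v t) (v t) + Ψ) (W t))
        + 2 * (lam * γ₁) * inner ℝ (W t) (G (W t))) * Real.exp (2 * (lam * γ₁) * t))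
      (Set.Ici 0) t := by
    intro t ht
    have h1 := hW t ht
    have h2 := G.hasFDerivAt.comp_hasDerivWithinAt t h1
    have h3 := h1.inner ℝ h2
    have h4 : HasDerivWithinAt (fun s : ℝ => Real.exp (2 * (lam * γ₁) * s))
        (Real.exp (2 * (lam * γ₁) * t) * (2 * (lam * γ₁) * 1)) (Set.Ici 0) t :=
      (((hasDerivAt_id t).const_mul _).exp).hasDerivWithinAt
    refine (h3.mul h4).congr_deriv ?_
    have h5 : G (-(Matrix.toEuclideanLin (Γ * (Matrix.vecMulVec (v t) (v t) + Ψ)) (W t)))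
        = -(Matrix.toEuclideanLin (Matrix.vecMulVec (v t) (v t) + Ψ) (W t)) := by
      rw [map_neg, hGa, hcomp, Matrix.nonsing_inv_mul_cancel_left _ _ hdet]
    have h6 : ∀ x y, inner ℝ x (G y) = inner ℝ (G x) y := fun x y =>
      (aux_adj Γ⁻¹ hGh x y).symm
    simp only [Function.comp_apply]
    rw [h6 (-(Matrix.toEuclideanLin _ (W t))) (W t), h5, inner_neg_left, inner_neg_right,
      real_inner_comm (W t)]
    ring
  have hanti : AntitoneOn
      (fun s => inner ℝ (W s) (G (W s)) * Real.exp (2 * (lam * γ₁) * s)) (Set.Ici 0) := by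
    refine antitoneOn_of_hasDerivWithinAt_nonpos (convex_Ici 0)
      (fun t ht => (hV t ht).continuousWithinAt)
      (fun t ht => (hV t (interior_subset ht)).mono interior_subset) ?_
    intro t ht
    refine mul_nonpos_of_nonpos_of_nonneg ?_ (Real.exp_pos _).le
    have c1 := aux_vec (v t) (W t)
    have c2 := b3 (W t)
    have c3 := mul_le_mul_of_nonneg_left (b1 (W t)) hlampos.le
    rw [map_add, LinearMap.add_apply, inner_add_right]
    linarith
  intro t ht
  have key := hanti (Set.mem_Ici.2 le_rfl) (Set.mem_Ici.2 ht) ht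
  simp only [mul_zero, Real.exp_zero, mul_one] at key
  have k1 := b2 (W t)
  have k2 := b1 (W 0)
  refine le_of_abs_le <| abs_le_of_sq_le_sq ?_ (by positivity)
  have hE : Real.exp (2 * (lam * γ₁) * t) * Real.exp (-(lam * γ₁) * t) ^ 2 = 1 := by
    rw [← Real.exp_nat_mul, ← Real.exp_add]
    simp only [Real.exp_eq_one_iff]
    push_cast
    ring
  rw [mul_pow, mul_pow, Real.sq_sqrt (by positivity)]
  have k3 : inner ℝ (W t) (G (W t))
      ≤ inner ℝ (W 0) (G (W 0)) * Real.exp (-(lam * γ₁) * t) ^ 2 := by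
    have := mul_le_mul_of_nonneg_right key (sq_nonneg (Real.exp (-(lam * γ₁) * t)))
    rwa [mul_assoc, hE, mul_one] at this
  have k4 : inner ℝ (W 0) (G (W 0)) ≤ ‖W 0‖ ^ 2 / γ₁ := by
    rw [le_div_iff₀ hγ₁pos]
    linarith
  calc ‖W t‖ ^ 2 ≤ γ₂ * inner ℝ (W t) (G (W t)) := k1
    _ ≤ γ₂ * (‖W 0‖ ^ 2 / γ₁ * Real.exp (-(lam * γ₁) * t) ^ 2) := by
      refine mul_le_mul_of_nonneg_left (k3.trans ?_) hγ₂pos.le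
      exact mul_le_mul_of_nonneg_right k4 (sq_nonneg _)
    _ = _ := by ring
end
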